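/- For m ≥ 2 and 1 ≤ k ≤ m−1 define π̂_k : Δ_{m−1,k} → {1,…,m}^m by π̂_k(a) = (a_1,…,a_{k−1}, m, a_{k+1},…,a_{m−1}, m), i.e. the k-th entry is replaced by m and the entry m is appended at position m. Then each π̂_k maps Δ_{m−1,k} injectively into Δ_{m,m}, sgn(π̂_k(a)) = −sgn(a) for every a ∈ Δ_{m−1,k}, the images π̂_k(Δ_{m−1,k}) for k = 1,…,m−1 are pairwise disjoint, and Δ_{m,m} equals the union of these images. -/

import Mathlib

/-!
Write `m = n + 2`. In a tuple `x ∈ Δ_{m,m}` let `k < m` be the largest position with `x_k ≥ k`; it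
exists because `x_1 ≥ 1`. No position strictly between `k` and `m` carries an excess `x_j > j`, so
the defining equation at `k` forces `x_k = m`. For `i < k` the term `j = k` contributes `m - k` to
the sum in the equation, which turns `m - ∑` for `x` into `k - ∑` for the tuple of length `m - 1`
with `k`-th entry `k`. This is the content of `excess_hatPi` and `memDelta_hatPi_iff`; both
directions of the bijection follow. The position `k` is recovered from the image, which gives
disjointness, and `k` is the only additional excess position, which gives the sign.
-/

/-!
For `m ≥ 2` and `1 ≤ k ≤ m−1`, the map
`π̂_k : Δ_{m−1,k} → {1,…,m}^m`, `a ↦ (a_1,…,a_{k−1}, m, a_{k+1},…,a_{m−1}, m)`,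
maps `Δ_{m−1,k}` injectively into `Δ_{m,m}`, reverses the sign, has pairwise disjoint
images for distinct `k`, and `Δ_{m,m}` is the union of these images.

Tuples `a ∈ Δ_{d,k}` are encoded as functions `a : Fin d → ℕ`; the Lean index
`i : Fin d` corresponds to paper index `(i:ℕ)+1`.  Here `m = n + 2`.
-/

/-- Membership predicate for `Δ_{d,k}`. -/
def memDelta (d k : ℕ) (a : Fin d → ℕ) : Prop :=
  (∀ i : Fin d, (i : ℕ) + 1 = k → a i = k) ∧
  (∀ i : Fin d, k < (i : ℕ) + 1 → a i < (i : ℕ) + 1) ∧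
  (∀ i : Fin d, (i : ℕ) + 1 < k →
    (a i < (i : ℕ) + 1 ∨
      (a i : ℤ) = (k : ℤ) -
        ∑ j ∈ Finset.univ.filter
            (fun j : Fin d => (i : ℕ) < (j : ℕ) ∧ (j : ℕ) + 1 < a j),
          ((a j : ℤ) - ((j : ℕ) + 1))))

/-- The set `Δ_{d,k}` of tuples of positive integers, as a finite set of functions
`Fin d → ℕ` (all entries automatically lie in `{1,…,d}`). -/
noncomputable def DeltaSet (d k : ℕ) : Finset (Fin d → ℕ) :=
  @Finset.filter _ (memDelta d k) (Classical.decPred _)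
    (Fintype.piFinset fun _ : Fin d => Finset.Icc 1 d)

/-- `sgn(a) = (−1)^{#{i : a_i > i}}`. -/
def sgnDelta {d : ℕ} (a : Fin d → ℕ) : ℤ :=
  (-1) ^ (Finset.univ.filter fun i : Fin d => (i : ℕ) + 1 < a i).card

/-- `π̂_k(a) = (a_1,…,a_{k−1}, m, a_{k+1},…,a_{m−1}, m)` with `m = n+2`:
the `k`-th entry is replaced by `m` and the entry `m` is appended at position `m`. -/
def hatPi (n : ℕ) (k : ℕ) (a : Fin (n + 1) → ℕ) : Fin (n + 2) → ℕ :=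
  Fin.snoc (fun i : Fin (n + 1) => if (i : ℕ) + 1 = k then n + 2 else a i) (n + 2)

/-- The total excess `∑ (a_j - j)` over the positions `j` beyond `i` with `a_j > j`, where `i` is
the zero-based index. -/
def excess {d : ℕ} (a : Fin d → ℕ) (i : ℕ) : ℤ :=
  ∑ j ∈ Finset.univ.filter (fun j : Fin d => i < (j : ℕ) ∧ (j : ℕ) + 1 < a j),
    ((a j : ℤ) - ((j : ℕ) + 1))

lemma excess_nonneg {d : ℕ} (a : Fin d → ℕ) (i : ℕ) : 0 ≤ excess a i := by
  refine Finset.sum_nonneg fun j hj => ?_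
  have := (Finset.mem_filter.1 hj).2.2
  omega

lemma excess_eq_zero {d : ℕ} (a : Fin d → ℕ) (i : ℕ)
    (h : ∀ j : Fin d, i < (j : ℕ) → a j ≤ (j : ℕ) + 1) : excess a i = 0 := by
  refine Finset.sum_eq_zero fun j hj => ?_
  have h1 := (Finset.mem_filter.1 hj).2
  have h2 := h j h1.1
  omega

lemma hatPi_last (n k : ℕ) (a : Fin (n + 1) → ℕ) : hatPi n k a (Fin.last _) = n + 2 := by
  simp [hatPi]

lemma hatPi_castSucc (n k : ℕ) (a : Fin (n + 1) → ℕ) (i : Fin (n + 1)) :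
    hatPi n k a i.castSucc = if (i : ℕ) + 1 = k then n + 2 else a i := by
  simp [hatPi]

/-- Replacing the entry `k` at position `k` by `m` adds the single term `m - k` to the sums that
range over position `k`. The zero-based index of position `k` is `k₀`. -/
lemma excess_hatPi (n : ℕ) (k₀ : Fin (n + 1)) (a : Fin (n + 1) → ℕ) (hk : a k₀ = (k₀ : ℕ) + 1)
    (i : ℕ) : excess (hatPi n (k₀ + 1) a) i =
      excess a i + if i < (k₀ : ℕ) then (n : ℤ) + 2 - (k₀ + 1) else 0 := by
  have hsingle : (if i < (k₀ : ℕ) then (n : ℤ) + 2 - (k₀ + 1) else 0) =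
      ∑ j : Fin (n + 1), if j = k₀ then
        (if i < (k₀ : ℕ) then (n : ℤ) + 2 - (k₀ + 1) else 0) else 0 := by
    simp
  rw [hsingle]
  simp only [excess, Finset.sum_filter]
  rw [Fin.sum_univ_castSucc, hatPi_last, ← Finset.sum_add_distrib]
  simp only [Fin.val_last, Fin.val_castSucc, hatPi_castSucc]
  rw [if_neg (by omega), add_zero]
  refine Finset.sum_congr rfl fun j _ => ?_
  by_cases hj : j = k₀
  · subst hj
    have := j.isLt
    by_cases hi : i < (j : ℕ)
    · have hj : (j : ℕ) + 1 < n + 2 := by omega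
      simp only [hi, hj, and_self, if_true, hk, lt_irrefl, and_false, if_false]
      push_cast
      ring
    · simp [hi]
  · have hj' : (j : ℕ) ≠ k₀ := fun h => hj (Fin.ext h)
    simp [hj, hj']

/-- The equation at a position `i < k` for `a` and for its image are equivalent, the remaining
conditions on both sides being automatic once `a` has the entry `k` at position `k` and entries
`a_j < j` beyond it. -/
lemma memDelta_hatPi_iff (n : ℕ) (k₀ : Fin (n + 1)) (a : Fin (n + 1) → ℕ)
    (hk : a k₀ = (k₀ : ℕ) + 1) (hgt : ∀ j : Fin (n + 1), (k₀ : ℕ) < j → a j < (j : ℕ) + 1) :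
    memDelta (n + 2) (n + 2) (hatPi n (k₀ + 1) a) ↔ memDelta (n + 1) (k₀ + 1) a := by
  have hex := excess_hatPi n k₀ a hk
  constructor
  · rintro ⟨-, -, h⟩
    refine ⟨fun i hi => ?_, fun i hi => hgt i (by omega), fun i hi => ?_⟩
    · obtain rfl : i = k₀ := Fin.ext (by omega)
      exact hk
    · have h1 := h i.castSucc (by rw [Fin.val_castSucc]; omega)
      change _ ∨ _ = _ - excess _ _ at h1
      change _ ∨ _ = _ - excess _ _
      rw [hatPi_castSucc, if_neg (by omega), Fin.val_castSucc, hex, if_pos (by omega)] at h1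
      refine h1.imp id fun h2 => ?_
      push_cast at h2 ⊢
      linarith
  · rintro ⟨-, -, h⟩
    refine ⟨fun i hi => ?_, fun i hi => ?_, fun i hi => ?_⟩
    · obtain rfl : i = Fin.last _ := Fin.ext (by simp; omega)
      exact hatPi_last _ _ _
    · have := i.isLt
      omega
    · obtain ⟨i, rfl⟩ : ∃ j : Fin (n + 1), i = j.castSucc :=
        ⟨⟨i, by omega⟩, by ext; simp⟩
      change _ ∨ _ = _ - excess _ _
      rw [hatPi_castSucc, Fin.val_castSucc, hex]
      rcases lt_trichotomy (i : ℕ) k₀ with hlt | heq | hlt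
      · rw [if_neg (by omega), if_pos hlt]
        have h1 := h i (by omega)
        change _ ∨ _ = _ - excess _ _ at h1
        refine h1.imp id fun h2 => ?_
        push_cast at h2 ⊢
        linarith
      · rw [if_pos (by omega), if_neg (by omega), excess_eq_zero a i]
        · right; simp
        · intro j hj
          exact (hgt j (by omega)).le
      · rw [if_neg (by omega)]
        exact Or.inl (hgt i hlt)

lemma mem_DeltaSet {d k : ℕ} {a : Fin d → ℕ} :
    a ∈ DeltaSet d k ↔ (∀ i, 1 ≤ a i ∧ a i ≤ d) ∧ memDelta d k a := by
  simp [DeltaSet, Fintype.mem_piFinset]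

/-- Position `k` is the only excess position of the image that is not one of `a`. -/
lemma sgnDelta_hatPi (n : ℕ) (k₀ : Fin (n + 1)) (a : Fin (n + 1) → ℕ)
    (hk : a k₀ = (k₀ : ℕ) + 1) : sgnDelta (hatPi n (k₀ + 1) a) = -sgnDelta a := by
  have hcard : (Finset.univ.filter fun i : Fin (n + 2) =>
        (i : ℕ) + 1 < hatPi n (k₀ + 1) a i).card =
      (Finset.univ.filter fun i : Fin (n + 1) => (i : ℕ) + 1 < a i).card + 1 := by
    have hsingle : 1 = ∑ j : Fin (n + 1), if j = k₀ then 1 else 0 := by simp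
    refine Eq.trans ?_ (congrArg _ hsingle.symm)
    simp only [Finset.card_filter]
    rw [Fin.sum_univ_castSucc, hatPi_last, ← Finset.sum_add_distrib]
    simp only [Fin.val_last, Fin.val_castSucc, hatPi_castSucc]
    rw [if_neg (by omega), add_zero]
    refine Finset.sum_congr rfl fun j _ => ?_
    by_cases hj : j = k₀
    · subst hj
      simp [hk]
      omega
    · have hj' : (j : ℕ) ≠ k₀ := fun h => hj (Fin.ext h)
      simp [hj, hj']
  rw [sgnDelta, hcard, pow_succ, sgnDelta]
  ring

/-- Distinct positions give distinct images: at the larger position `k'` one image has the entry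
`m`, the other the entry `a_{k'} ≤ m - 1`. -/
lemma hatPi_ne_of_lt (n k k' : ℕ) (hk' : k' ≤ n + 1) (hlt : k < k') (a b : Fin (n + 1) → ℕ)
    (ha : a ∈ DeltaSet (n + 1) k) : hatPi n k a ≠ hatPi n k' b := by
  intro h
  have h1 := congrFun h (Fin.castSucc ⟨k' - 1, by omega⟩)
  rw [hatPi_castSucc, hatPi_castSucc, if_neg (by simp; omega), if_pos (by simp; omega)] at h1
  have h2 := ((mem_DeltaSet.1 ha).1 ⟨k' - 1, by omega⟩).2
  omega

lemma exists_hatPi_eq (n : ℕ) (x : Fin (n + 2) → ℕ) (hx : x ∈ DeltaSet (n + 2) (n + 2)) :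
    ∃ k, 1 ≤ k ∧ k ≤ n + 1 ∧ ∃ a ∈ DeltaSet (n + 1) k, hatPi n k a = x := by
  obtain ⟨hb, hmem⟩ := mem_DeltaSet.1 hx
  obtain ⟨hlast, -, heq⟩ := id hmem
  have hlast' : x (Fin.last _) = n + 2 := hlast _ (by simp)
  -- `k₀` is the last position before the end whose entry is on or above the diagonal.
  obtain ⟨k₀, hk₀, hmax⟩ : ∃ k₀ : Fin (n + 1), (k₀ : ℕ) + 1 ≤ x k₀.castSucc ∧
      ∀ j : Fin (n + 1), (k₀ : ℕ) < j → x j.castSucc < (j : ℕ) + 1 := by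
    let S := Finset.univ.filter fun j : Fin (n + 1) => (j : ℕ) + 1 ≤ x j.castSucc
    have hS : S.Nonempty := ⟨0, by simpa [S, Nat.one_le_iff_ne_zero, Nat.pos_iff_ne_zero] using (hb 0).1⟩
    refine ⟨S.max' hS, (Finset.mem_filter.1 (S.max'_mem hS)).2, fun j hj => ?_⟩
    by_contra hcon
    have : j ≤ S.max' hS := S.le_max' j (by simp [S]; omega)
    exact absurd (Fin.le_def.1 this) (by omega)
  have hxk : x k₀.castSucc = n + 2 := by
    have h1 := heq k₀.castSucc (by rw [Fin.val_castSucc]; omega)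
    change _ ∨ _ = _ - excess _ _ at h1
    rw [excess_eq_zero, Fin.val_castSucc] at h1
    · push_cast at h1
      omega
    · intro j hj
      induction j using Fin.lastCases with
      | last => simp [hlast']
      | cast j => exact (hmax j hj).le
  let a : Fin (n + 1) → ℕ := fun i => if i = k₀ then (k₀ : ℕ) + 1 else x i.castSucc
  have hak : a k₀ = (k₀ : ℕ) + 1 := by simp [a]
  have hgt : ∀ j : Fin (n + 1), (k₀ : ℕ) < j → a j < (j : ℕ) + 1 := by
    intro j hj
    have hne : j ≠ k₀ := by rintro rfl; omega
    simpa [a, hne] using hmax j hj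
  have hax : hatPi n (k₀ + 1) a = x := by
    funext i
    induction i using Fin.lastCases with
    | last => rw [hatPi_last, hlast']
    | cast i =>
      rw [hatPi_castSucc]
      by_cases hi : i = k₀
      · subst hi
        simp [hxk]
      · have hi' : (i : ℕ) ≠ k₀ := fun h => hi (Fin.ext h)
        simp [a, hi, hi']
  have ham : memDelta (n + 1) (k₀ + 1) a := by
    rw [← memDelta_hatPi_iff n k₀ a hak hgt, hax]
    exact hmem
  refine ⟨k₀ + 1, by omega, by omega, a, mem_DeltaSet.2 ⟨fun i => ⟨?_, ?_⟩, ham⟩, hax⟩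
  · by_cases hi : i = k₀
    · simp [a, hi]
    · simpa [a, hi] using (hb i.castSucc).1
  · have hi := i.isLt
    rcases lt_trichotomy (i : ℕ) k₀ with hlt | he | hlt
    · have h1 := ham.2.2 i (by omega)
      change _ ∨ _ = _ - excess _ _ at h1
      -- An entry given by the equation is at most `k`, the subtracted sum being nonnegative.
      have := excess_nonneg a i
      push_cast at h1
      omega
    · obtain rfl : i = k₀ := Fin.ext he
      omega
    · have := hgt i hlt
      omega

theorem delta_hatPi (n : ℕ) :
    -- π̂_k maps Δ_{m−1,k} into Δ_{m,m}
    (∀ k, 1 ≤ k → k ≤ n + 1 → ∀ a ∈ DeltaSet (n + 1) k,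
        hatPi n k a ∈ DeltaSet (n + 2) (n + 2)) ∧
    -- π̂_k is injective on Δ_{m−1,k}
    (∀ k, 1 ≤ k → k ≤ n + 1 → ∀ a ∈ DeltaSet (n + 1) k, ∀ b ∈ DeltaSet (n + 1) k,
        hatPi n k a = hatPi n k b → a = b) ∧
    -- sgn(π̂_k(a)) = −sgn(a)
    (∀ k, 1 ≤ k → k ≤ n + 1 → ∀ a ∈ DeltaSet (n + 1) k,
        sgnDelta (hatPi n k a) = -sgnDelta a) ∧
    -- the images are pairwise disjoint
    (∀ k k', 1 ≤ k → k ≤ n + 1 → 1 ≤ k' → k' ≤ n + 1 → k ≠ k' →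
        ∀ a ∈ DeltaSet (n + 1) k, ∀ b ∈ DeltaSet (n + 1) k',
          hatPi n k a ≠ hatPi n k' b) ∧
    -- Δ_{m,m} is the union of the images
    (∀ x ∈ DeltaSet (n + 2) (n + 2), ∃ k, 1 ≤ k ∧ k ≤ n + 1 ∧
        ∃ a ∈ DeltaSet (n + 1) k, hatPi n k a = x) := by
  have key : ∀ k, 1 ≤ k → k ≤ n + 1 → ∀ a ∈ DeltaSet (n + 1) k,
      ∃ k₀ : Fin (n + 1), k = k₀ + 1 ∧ a k₀ = (k₀ : ℕ) + 1 := by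
    intro k hk1 hk2 a ha
    obtain ⟨k₀, rfl⟩ : ∃ k₀ : Fin (n + 1), k = k₀ + 1 := ⟨⟨k - 1, by omega⟩, by simp; omega⟩
    exact ⟨k₀, rfl, (mem_DeltaSet.1 ha).2.1 k₀ rfl⟩
  refine ⟨?_, ?_, ?_, ?_, exists_hatPi_eq n⟩
  · intro k hk1 hk2 a ha
    obtain ⟨k₀, rfl, hak⟩ := key k hk1 hk2 a ha
    obtain ⟨hb, hmem⟩ := mem_DeltaSet.1 ha
    refine mem_DeltaSet.2 ⟨fun i => ?_, (memDelta_hatPi_iff n k₀ a hak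
      fun j hj => hmem.2.1 j (by omega)).2 hmem⟩
    induction i using Fin.lastCases with
    | last => simp [hatPi_last]
    | cast i =>
      have := hb i
      rw [hatPi_castSucc]
      split_ifs <;> omega
  · intro k hk1 hk2 a ha b hbm hab
    obtain ⟨k₀, rfl, hak⟩ := key k hk1 hk2 a ha
    have hbk := (mem_DeltaSet.1 hbm).2.1 k₀ rfl
    funext i
    by_cases hi : i = k₀
    · rw [hi, hak, hbk]
    · have hi' : (i : ℕ) ≠ k₀ := fun h => hi (Fin.ext h)
      simpa [hatPi_castSucc, hi'] using congrFun hab i.castSucc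
  · intro k hk1 hk2 a ha
    obtain ⟨k₀, rfl, hak⟩ := key k hk1 hk2 a ha
    exact sgnDelta_hatPi n k₀ a hak
  · intro k k' _ hk _ hk' hne a ha b hb
    rcases lt_or_gt_of_ne hne with hlt | hlt
    · exact hatPi_ne_of_lt n k k' hk' hlt a b ha
    · exact (hatPi_ne_of_lt n k' k hk hlt b a hb).symm
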